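/- arXiv:2511.12863 — 4 statements merged into one kernel-verified Lean document; each statement's English description precedes it below -/
import Mathlib

section
/- If z and z' are distinct elements of the same group D_t and their one-step marginal contributions coincide, i.e., v(S ∪ {z}) − v(S) = v(S ∪ {z'}) − v(S) for every S ⊆ D \ {z, z'}, then φ^σ(z; v, D) = φ^σ(z'; v, D). -/
open Finset

variable {α : Type*}

/-- Prefix union `U_t = D₁ ∪ ⋯ ∪ D_t` (groups are 0-indexed, so this is the union of
the groups with index `< t`). -/
def prefixUnion [DecidableEq α] (Dg : ℕ → Finset α) (t : ℕ) : Finset α :=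
  (Finset.range t).biUnion Dg

/-- Asymmetric Data Shapley value (subset form) of a source `z` belonging to group `Dg t`. -/
noncomputable def ADS [DecidableEq α] (Dg : ℕ → Finset α) (v : Finset α → ℝ) (t : ℕ)
    (z : α) : ℝ :=
  (1 / (Dg t).card) *
    ∑ S ∈ ((Dg t).erase z).powerset,
      ((((Dg t).card - 1).choose S.card : ℝ))⁻¹ *
        (v (prefixUnion Dg t ∪ S ∪ {z}) - v (prefixUnion Dg t ∪ S))

/-!
In group `D_t`, the ADS value is the Shapley value of the game `w S = v (U_{t-1} ∪ S)`. For any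
weights `p |S|` depending only on the size of the coalition, pair each coalition `S` avoiding `z`
and `z'` with `S ∪ {z'}`: together they contribute

  `p |S| (w (S ∪ {z}) - w S) + p (|S| + 1) (w (S ∪ {z, z'}) - w (S ∪ {z'}))`

to the value of `z`, which is symmetric in `z` and `z'` as soon as `w (S ∪ {z}) = w (S ∪ {z'})`.
-/

section Semivalue

variable {R M : Type*} [DecidableEq α] [Semiring R] [AddCommGroup M] [Module R M]

/-- The semivalue of player `x` in the cooperative game `w` on the player set `N`: the sum of the
marginal contributions of `x`, a coalition `S` having weight `p #S`. The weights are not assumed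
to be nonnegative or normalized; `p k = (n * (n - 1).choose k)⁻¹` with `n = #N` gives the Shapley
value. -/
def semivalue (p : ℕ → R) (N : Finset α) (w : Finset α → M) (x : α) : M :=
  ∑ S ∈ (N.erase x).powerset, p #S • (w (insert x S) - w S)

theorem semivalue_eq_sum_powerset_erase_erase (p : ℕ → R) {N : Finset α} (w : Finset α → M)
    {x y : α} (hy : y ∈ N) (hxy : x ≠ y) :
    semivalue p N w x = ∑ S ∈ ((N.erase x).erase y).powerset,
      (p #S • (w (insert x S) - w S) +
        p (#S + 1) • (w (insert x (insert y S)) - w (insert y S))) := by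
  have hyN : y ∈ N.erase x := mem_erase.mpr ⟨hxy.symm, hy⟩
  rw [semivalue, ← insert_erase hyN, sum_powerset_insert (notMem_erase y _), ← sum_add_distrib,
    erase_insert (notMem_erase y _)]
  refine sum_congr rfl fun S hS => ?_
  have hyS : y ∉ S := fun h => notMem_erase y _ (mem_powerset.mp hS h)
  rw [card_insert_of_notMem hyS]

theorem semivalue_eq_of_insert_eq_insert (p : ℕ → R) {N : Finset α} {w : Finset α → M} {x y : α}
    (hx : x ∈ N) (hy : y ∈ N)
    (hw : ∀ S ⊆ N \ {x, y}, w (insert x S) = w (insert y S)) :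
    semivalue p N w x = semivalue p N w y := by
  obtain rfl | hxy := eq_or_ne x y
  · rfl
  rw [semivalue_eq_sum_powerset_erase_erase p w hy hxy,
    semivalue_eq_sum_powerset_erase_erase p w hx hxy.symm, erase_right_comm]
  refine sum_congr rfl fun S hS => ?_
  have hSN : S ⊆ N \ {x, y} := by
    rwa [sdiff_insert, sdiff_singleton_eq_erase, ← mem_powerset]
  rw [insert_comm y x S, hw S hSN]

end Semivalue

section PrefixUnion

variable [DecidableEq α] {Dg : ℕ → Finset α} {t T : ℕ}

theorem prefixUnion_succ (Dg : ℕ → Finset α) (t : ℕ) :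
    prefixUnion Dg (t + 1) = prefixUnion Dg t ∪ Dg t := by
  rw [prefixUnion, range_add_one, biUnion_insert, union_comm, prefixUnion]

theorem prefixUnion_mono (Dg : ℕ → Finset α) : Monotone (prefixUnion Dg) := fun _ _ hst =>
  biUnion_subset_biUnion_of_subset_left Dg (range_subset_range.mpr hst)

theorem disjoint_prefixUnion_left {A : Finset α} :
    Disjoint (prefixUnion Dg t) A ↔ ∀ i < t, Disjoint (Dg i) A := by
  simp only [prefixUnion, disjoint_biUnion_left, mem_range]

theorem prefixUnion_union_subset_sdiff {A S : Finset α} (ht : t < T)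
    (hdisj : ∀ i < t, Disjoint (Dg i) (Dg t)) (hA : A ⊆ Dg t) (hS : S ⊆ Dg t \ A) :
    prefixUnion Dg t ∪ S ⊆ prefixUnion Dg T \ A := by
  obtain ⟨hSt, hSA⟩ := subset_sdiff.mp hS
  refine subset_sdiff.mpr ⟨?_, disjoint_union_left.mpr ⟨?_, hSA⟩⟩
  · calc prefixUnion Dg t ∪ S
      _ ⊆ prefixUnion Dg t ∪ Dg t := union_subset_union_right hSt
      _ = prefixUnion Dg (t + 1) := (prefixUnion_succ Dg t).symm
      _ ⊆ prefixUnion Dg T := prefixUnion_mono Dg ht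
  · exact (disjoint_prefixUnion_left.mpr hdisj).mono_right hA

end PrefixUnion

theorem ADS_eq_semivalue [DecidableEq α] (Dg : ℕ → Finset α) (v : Finset α → ℝ) (t : ℕ) (z : α) :
    ADS Dg v t z =
      semivalue (fun k => 1 / (#(Dg t) : ℝ) * ((#(Dg t) - 1).choose k : ℝ)⁻¹) (Dg t)
        (fun S => v (prefixUnion Dg t ∪ S)) z := by
  simp only [ADS, semivalue, mul_sum, smul_eq_mul, mul_assoc, union_insert, union_singleton]

theorem ads_within_group_symmetry_general [DecidableEq α] (Dg : ℕ → Finset α)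
    (v : Finset α → ℝ) (t : ℕ) (z z' : α) (hz : z ∈ Dg t) (hz' : z' ∈ Dg t)
    (hdep : ∀ S ⊆ Dg t \ {z, z'},
      v (prefixUnion Dg t ∪ S ∪ {z}) - v (prefixUnion Dg t ∪ S) =
        v (prefixUnion Dg t ∪ S ∪ {z'}) - v (prefixUnion Dg t ∪ S)) :
    ADS Dg v t z = ADS Dg v t z' := by
  rw [ADS_eq_semivalue, ADS_eq_semivalue]
  refine semivalue_eq_of_insert_eq_insert _ hz hz' fun S hS => ?_
  simpa only [union_insert, union_singleton, sub_left_inj] using hdep S hS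

/-- If `z` and `z'` are distinct elements of the same group `D_t` whose one-step marginal
contributions coincide on every `S ⊆ D \ {z, z'}`, then `φ^σ(z; v, D) = φ^σ(z'; v, D)`. -/
theorem ads_within_group_symmetry [DecidableEq α]
    (T : ℕ) (hT : 1 ≤ T) (Dg : ℕ → Finset α)
    (hdisj : ∀ i < T, ∀ j < T, i ≠ j → Disjoint (Dg i) (Dg j))
    (hne : ∀ j < T, (Dg j).Nonempty)
    (D : Finset α) (hD : D = (Finset.range T).biUnion Dg)
    (v : Finset α → ℝ)
    (t : ℕ) (ht : t < T)
    (z z' : α) (hz : z ∈ Dg t) (hz' : z' ∈ Dg t) (hzz' : z ≠ z')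
    (hdep : ∀ S ⊆ D \ {z, z'}, v (S ∪ {z}) - v S = v (S ∪ {z'}) - v S) :
    ADS Dg v t z = ADS Dg v t z' := by
  subst hD
  exact ads_within_group_symmetry_general Dg v t z z' hz hz' fun S hS =>
    hdep _ <| prefixUnion_union_subset_sdiff ht (fun i hi => hdisj i (hi.trans ht) t ht hi.ne)
      (insert_subset hz (singleton_subset_iff.mpr hz')) hS
end

section
/- Fix t ∈ {1, …, T}, z ∈ D_t, and S_t ⊆ D_t \ {z}. The number of ordered permutations π ∈ R^σ(D) whose predecessor set of z equals U_{t−1} ∪ S_t is exactly (∏_{j=1}^{t−1} |D_j|!) · |S_t|! · (|D_t| − |S_t| − 1)! · (∏_{j=t+1}^{T} |D_j|!). -/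
open Finset

variable {α : Type*}

/-- A list `π` respects the ordered groups `σ = (D₁, …, D_T)` if it is the concatenation,
in group order, of a duplicate-free enumeration of each group. -/
def Respects [DecidableEq α] (Dg : ℕ → Finset α) (T : ℕ) (π : List α) : Prop :=
  ∃ Ls : Fin T → List α,
    (∀ j : Fin T, (Ls j).Nodup ∧ (Ls j).toFinset = Dg j.1) ∧
    π = (List.ofFn Ls).flatten

/-- `R^σ(D)`: the finite set of duplicate-free lists enumerating `D` that respect the
group order `σ`. -/
noncomputable def Rsigma [DecidableEq α] (Dg : ℕ → Finset α) (T : ℕ) (D : Finset α) :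
    Finset (List α) :=
  @Finset.filter _ (Respects Dg T) (Classical.decPred _) D.toList.permutations.toFinset

/-- `π^{<z}`: the finite set of elements strictly preceding `z` in the list `π`. -/
def predSet [DecidableEq α] (π : List α) (z : α) : Finset α :=
  (π.takeWhile (fun a => a ≠ z)).toFinset

/-! An ordered permutation is a concatenation `p ++ m ++ q` of enumerations of the groups before
`D_t`, of `D_t`, and of the groups after `D_t`. The list `p` always enumerates `U_{t-1}`, so the
condition on the predecessors of `z` only constrains `m`, which has to be `l ++ z :: r` with `l`
enumerating `S_t` and `r` enumerating the rest of `D_t`. The candidates for each factor all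
have the same length, so concatenation is injective and the cardinalities multiply. -/

lemma card_image₂_append [DecidableEq α] {s : Finset (List α)} {n : ℕ}
    (hs : ∀ l ∈ s, l.length = n) (u : Finset (List α)) :
    #(image₂ (· ++ ·) s u) = #s * #u := by
  rw [card_image₂_iff]
  rintro ⟨l, r⟩ ⟨hl, -⟩ ⟨l', r'⟩ ⟨hl', -⟩ happend
  obtain ⟨rfl, rfl⟩ := List.append_inj happend ((hs l hl).trans (hs l' hl').symm)
  rfl

section Enumerations

/-- The finite set of duplicate-free lists enumerating `G`. -/
def enumerations (G : Finset α) : Finset (List α) :=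
  ⟨G.val.lists, Multiset.lists_nodup_finset G⟩

variable {G : Finset α} {l : List α}

lemma mem_enumerations : l ∈ enumerations G ↔ (l : Multiset α) = G.val :=
  (Multiset.mem_lists_iff G.val l).trans eq_comm

lemma mem_enumerations_iff_nodup_toFinset [DecidableEq α] :
    l ∈ enumerations G ↔ l.Nodup ∧ l.toFinset = G := by
  rw [mem_enumerations]
  constructor
  · intro hl
    have hnodup : l.Nodup := Multiset.coe_nodup.1 (hl ▸ G.nodup)
    exact ⟨hnodup, val_injective ((List.toFinset_val l).trans (hnodup.dedup.symm ▸ hl))⟩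
  · rintro ⟨hnodup, rfl⟩
    rw [List.toFinset_val, hnodup.dedup]

lemma length_of_mem_enumerations (hl : l ∈ enumerations G) : l.length = #G :=
  congrArg Multiset.card (mem_enumerations.1 hl)

lemma card_enumerations (G : Finset α) : #(enumerations G) = (#G).factorial :=
  calc #(enumerations G) = Multiset.card (Multiset.lists (G.toList : Multiset α)) := by
        rw [coe_toList, enumerations, card_mk]
    _ = (#G).factorial := by
        rw [Multiset.lists_coe, Multiset.coe_card, List.length_permutations, length_toList]

lemma enumerations_eq_toFinset_permutations [DecidableEq α] (G : Finset α) :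
    enumerations G = G.toList.permutations.toFinset := by
  ext l
  rw [mem_enumerations, List.mem_toFinset, List.mem_permutations, ← coe_toList,
    Multiset.coe_eq_coe]

end Enumerations

section ConcatEnumerations

variable [DecidableEq α] {ι : Type*}

/-- The concatenations, in the order of the index list, of one enumeration of each group `f j`. -/
def concatEnumerations (f : ι → Finset α) : List ι → Finset (List α)
  | [] => {[]}
  | j :: js => image₂ (· ++ ·) (enumerations (f j)) (concatEnumerations f js)

lemma concatEnumerations_append (f : ι → Finset α) (is js : List ι) :
    concatEnumerations f (is ++ js) =
      image₂ (· ++ ·) (concatEnumerations f is) (concatEnumerations f js) := by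
  induction is with
  | nil => simp [concatEnumerations]
  | cons i is ih =>
    rw [List.cons_append, concatEnumerations, concatEnumerations, ih,
      image₂_assoc List.append_assoc]

lemma coe_of_mem_concatEnumerations {f : ι → Finset α} {js : List ι} {π : List α}
    (hπ : π ∈ concatEnumerations f js) :
    (π : Multiset α) = (js : Multiset ι).bind fun j => (f j).val := by
  induction js generalizing π with
  | nil => simpa [concatEnumerations] using hπ
  | cons j js ih =>
    obtain ⟨l, hl, q, hq, rfl⟩ := mem_image₂.1 hπ
    rw [← Multiset.coe_add, mem_enumerations.1 hl, ih hq, ← Multiset.cons_coe,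
      Multiset.cons_bind]

lemma length_of_mem_concatEnumerations {f : ι → Finset α} {js : List ι} {π : List α}
    (hπ : π ∈ concatEnumerations f js) : π.length = (js.map fun j => #(f j)).sum := by
  simpa [Multiset.card_bind, Function.comp_def] using
    congrArg Multiset.card (coe_of_mem_concatEnumerations hπ)

lemma card_concatEnumerations (f : ι → Finset α) (js : List ι) :
    #(concatEnumerations f js) = (js.map fun j => (#(f j)).factorial).prod := by
  induction js with
  | nil => simp [concatEnumerations]
  | cons j js ih =>
    rw [concatEnumerations, card_image₂_append fun _ => length_of_mem_enumerations,
      card_enumerations, ih, List.map_cons, List.prod_cons]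

lemma mem_concatEnumerations_ofFn (f : ι → Finset α) {n : ℕ} (g : Fin n → ι) (π : List α) :
    π ∈ concatEnumerations f (List.ofFn g) ↔
      ∃ Ls : Fin n → List α, (∀ j, Ls j ∈ enumerations (f (g j))) ∧ π = (List.ofFn Ls).flatten := by
  induction n generalizing π with
  | zero => simp [concatEnumerations]
  | succ n ih =>
    simp only [List.ofFn_succ, concatEnumerations, mem_image₂, ih, Fin.exists_fin_succ_pi,
      Fin.forall_fin_succ, Fin.cons_zero, Fin.cons_succ, List.flatten_cons]
    constructor
    · rintro ⟨l, hl, _, ⟨Ls, hLs, rfl⟩, rfl⟩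
      exact ⟨l, Ls, ⟨hl, hLs⟩, rfl⟩
    · rintro ⟨l, Ls, ⟨hl, hLs⟩, rfl⟩
      exact ⟨l, hl, _, ⟨Ls, hLs, rfl⟩, rfl⟩

end ConcatEnumerations

section Predecessors

variable [DecidableEq α] {U G S : Finset α} {p m q : List α} {z : α}

lemma predSet_cons_self (q : List α) (z : α) : predSet (z :: q) z = ∅ := by
  simp [predSet]

lemma predSet_append_of_notMem (hz : z ∉ p) (q : List α) :
    predSet (p ++ q) z = p.toFinset ∪ predSet q z := by
  rw [predSet, List.takeWhile_append_of_pos, List.toFinset_append, predSet]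
  exact fun a ha => decide_eq_true (ne_of_mem_of_not_mem ha hz)

lemma predSet_append_of_mem (hz : z ∈ m) (q : List α) : predSet (m ++ q) z = predSet m z := by
  obtain ⟨l, r, rfl, hl⟩ := List.eq_append_cons_of_mem hz
  rw [List.append_assoc, predSet_append_of_notMem hl, predSet_append_of_notMem hl,
    List.cons_append, predSet_cons_self, predSet_cons_self]

lemma predSet_subset_toFinset (m : List α) (z : α) : predSet m z ⊆ m.toFinset :=
  fun _ ha => List.mem_toFinset.2 (List.takeWhile_subset _ (List.mem_toFinset.1 ha))

lemma predSet_append_append_eq_union_iff (hz : z ∈ G) (hS : S ⊆ G) (hp : Disjoint p.toFinset G)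
    (hm : m.toFinset = G) :
    predSet (p ++ (m ++ q)) z = p.toFinset ∪ S ↔ predSet m z = S := by
  subst hm
  have hzp : z ∉ p := fun h => disjoint_left.1 hp (List.mem_toFinset.2 h) hz
  rw [predSet_append_of_notMem hzp, predSet_append_of_mem (List.mem_toFinset.1 hz)]
  refine ⟨fun h => ?_, congrArg _⟩
  rw [← union_sdiff_cancel_left (hp.mono_right (predSet_subset_toFinset m z)), h,
    union_sdiff_cancel_left (hp.mono_right hS)]

lemma filter_predSet_image₂_append {P Q : Finset (List α)} (hP : ∀ p ∈ P, p.toFinset = U)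
    (hUG : Disjoint U G) (hz : z ∈ G) (hS : S ⊆ G) :
    (image₂ (· ++ ·) P (image₂ (· ++ ·) (enumerations G) Q)).filter
        (fun π => predSet π z = U ∪ S) =
      image₂ (· ++ ·) P
        (image₂ (· ++ ·) ((enumerations G).filter fun m => predSet m z = S) Q) := by
  have hpred : ∀ p ∈ P, ∀ m ∈ enumerations G, ∀ q,
      predSet (p ++ (m ++ q)) z = U ∪ S ↔ predSet m z = S := by
    intro p hp m hm q
    obtain rfl := hP p hp
    exact predSet_append_append_eq_union_iff hz hS hUG (mem_enumerations_iff_nodup_toFinset.1 hm).2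
  ext π
  simp only [mem_filter, mem_image₂]
  constructor
  · rintro ⟨⟨p, hp, _, ⟨m, hm, q, hq, rfl⟩, rfl⟩, hπ⟩
    exact ⟨p, hp, _, ⟨m, ⟨hm, (hpred p hp m hm q).1 hπ⟩, q, hq, rfl⟩, rfl⟩
  · rintro ⟨p, hp, _, ⟨m, ⟨hm, hmS⟩, q, hq, rfl⟩, rfl⟩
    exact ⟨⟨p, hp, _, ⟨m, hm, q, hq, rfl⟩, rfl⟩, (hpred p hp m hm q).2 hmS⟩

lemma val_eq_add_cons_erase_sdiff (hz : z ∈ G) (hS : S ⊆ G.erase z) :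
    G.val = S.val + z ::ₘ (G.erase z \ S).val := by
  rw [sdiff_val, Multiset.add_cons, add_tsub_cancel_of_le (val_le_iff.2 hS), erase_val,
    Multiset.cons_erase hz]

lemma filter_predSet_enumerations (hz : z ∈ G) (hS : S ⊆ G.erase z) :
    (enumerations G).filter (fun m => predSet m z = S) =
      image₂ (· ++ ·) (enumerations S) ((enumerations (G.erase z \ S)).image (z :: ·)) := by
  have hG := val_eq_add_cons_erase_sdiff hz hS
  ext m
  simp only [mem_filter, mem_image₂, exists_mem_image]
  constructor
  · rintro ⟨hm, hpred⟩
    obtain ⟨hnodup, htoFinset⟩ := mem_enumerations_iff_nodup_toFinset.1 hm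
    obtain ⟨l, r, rfl, hzl⟩ :=
      List.eq_append_cons_of_mem (List.mem_toFinset.1 (htoFinset.symm ▸ hz))
    rw [predSet_append_of_notMem hzl, predSet_cons_self, union_empty] at hpred
    have hl : l ∈ enumerations S :=
      mem_enumerations_iff_nodup_toFinset.2 ⟨hnodup.of_append_left, hpred⟩
    rw [mem_enumerations, ← Multiset.coe_add, ← Multiset.cons_coe, mem_enumerations.1 hl, hG,
      add_right_inj, Multiset.cons_inj_right] at hm
    exact ⟨l, hl, r, mem_enumerations.2 hm, rfl⟩
  · rintro ⟨l, hl, r, hr, rfl⟩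
    have hlS := (mem_enumerations_iff_nodup_toFinset.1 hl).2
    have hzl : z ∉ l := fun h => notMem_erase z G (hS (hlS ▸ List.mem_toFinset.2 h))
    rw [mem_enumerations] at hl hr ⊢
    rw [predSet_append_of_notMem hzl, predSet_cons_self, union_empty, ← Multiset.coe_add,
      ← Multiset.cons_coe, hl, hr, hG]
    exact ⟨rfl, hlS⟩

lemma card_filter_predSet_enumerations (hz : z ∈ G) (hS : S ⊆ G.erase z) :
    #((enumerations G).filter fun m => predSet m z = S) =
      (#S).factorial * (#G - #S - 1).factorial := by
  rw [filter_predSet_enumerations hz hS, card_image₂_append fun _ => length_of_mem_enumerations,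
    card_image_of_injective _ List.cons_injective, card_enumerations, card_enumerations,
    card_sdiff_of_subset hS, card_erase_of_mem hz, Nat.sub_right_comm]

end Predecessors

section OrderedPermutations

variable [DecidableEq α] {Dg : ℕ → Finset α} {t T : ℕ}

lemma respects_iff_mem_concatEnumerations {π : List α} :
    Respects Dg T π ↔ π ∈ concatEnumerations Dg (List.range T) := by
  rw [← List.map_coe_finRange_eq_range, ← List.ofFn_eq_map, mem_concatEnumerations_ofFn]
  simp only [Respects, mem_enumerations_iff_nodup_toFinset]

lemma toFinset_of_mem_concatEnumerations_range {p : List α}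
    (hp : p ∈ concatEnumerations Dg (List.range t)) : p.toFinset = prefixUnion Dg t :=
  congrArg Multiset.toFinset (coe_of_mem_concatEnumerations hp)

lemma Rsigma_biUnion_eq_concatEnumerations
    (hdisj : ∀ i < T, ∀ j < T, i ≠ j → Disjoint (Dg i) (Dg j)) :
    Rsigma Dg T ((range T).biUnion Dg) = concatEnumerations Dg (List.range T) := by
  have hpairwise : (range T : Set ℕ).PairwiseDisjoint Dg := fun i hi j hj =>
    hdisj i (mem_range.1 hi) j (mem_range.1 hj)
  ext π
  rw [Rsigma, ← enumerations_eq_toFinset_permutations, ← disjiUnion_eq_biUnion _ _ hpairwise,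
    @mem_filter _ _ (Classical.decPred _), respects_iff_mem_concatEnumerations,
    and_iff_right_iff_imp, mem_enumerations]
  exact coe_of_mem_concatEnumerations

lemma concatEnumerations_range_eq_image₂ (Dg : ℕ → Finset α) (ht : t < T) :
    concatEnumerations Dg (List.range T) =
      image₂ (· ++ ·) (concatEnumerations Dg (List.range t))
        (image₂ (· ++ ·) (enumerations (Dg t)) (concatEnumerations Dg (List.Ico (t + 1) T))) := by
  rw [← List.Ico.zero_bot T, ← List.Ico.append_consecutive t.zero_le ht.le, List.Ico.eq_cons ht,
    concatEnumerations_append, concatEnumerations, List.Ico.zero_bot]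

end OrderedPermutations

/-- Counting ordered permutations whose predecessor set of `z ∈ D_t` equals
`U_{t-1} ∪ S_t`: there are exactly
`(∏_{j<t} |D_j|!) · |S_t|! · (|D_t| − |S_t| − 1)! · (∏_{j>t} |D_j|!)` of them. -/
theorem ads_ordered_permutation_count [DecidableEq α]
    (T : ℕ) (hT : 1 ≤ T) (Dg : ℕ → Finset α)
    (hdisj : ∀ i < T, ∀ j < T, i ≠ j → Disjoint (Dg i) (Dg j))
    (hne : ∀ j < T, (Dg j).Nonempty)
    (D : Finset α) (hD : D = (Finset.range T).biUnion Dg)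
    (t : ℕ) (ht : t < T) (z : α) (hz : z ∈ Dg t)
    (St : Finset α) (hSt : St ⊆ (Dg t).erase z) :
    ((Rsigma Dg T D).filter (fun π => predSet π z = prefixUnion Dg t ∪ St)).card =
      (∏ j ∈ Finset.range t, ((Dg j).card).factorial) * (St.card).factorial *
        ((Dg t).card - St.card - 1).factorial *
        ∏ j ∈ Finset.Ico (t + 1) T, ((Dg j).card).factorial := by
  have hdisjoint : Disjoint (prefixUnion Dg t) (Dg t) :=
    (disjoint_biUnion_left _ _ _).2 fun j hj =>
      have hjt := mem_range.1 hj
      hdisj j (hjt.trans ht) t ht hjt.ne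
  have hsplit : (Rsigma Dg T D).filter (fun π => predSet π z = prefixUnion Dg t ∪ St) =
      image₂ (· ++ ·) (concatEnumerations Dg (List.range t))
        (image₂ (· ++ ·) ((enumerations (Dg t)).filter fun m => predSet m z = St)
          (concatEnumerations Dg (List.Ico (t + 1) T))) := by
    rw [hD, Rsigma_biUnion_eq_concatEnumerations hdisj, concatEnumerations_range_eq_image₂ Dg ht]
    exact filter_predSet_image₂_append (fun _ => toFinset_of_mem_concatEnumerations_range)
      hdisjoint hz (hSt.trans (erase_subset z (Dg t)))
  rw [hsplit,
    card_image₂_append fun _ => length_of_mem_concatEnumerations,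
    card_image₂_append fun _ hm => length_of_mem_enumerations (mem_filter.1 hm).1,
    card_filter_predSet_enumerations hz hSt, card_concatEnumerations, card_concatEnumerations,
    ← mul_assoc, ← mul_assoc]
  -- `Finset.range` and `Finset.Ico` on `ℕ` are defined from the lists indexing the two products.
  rfl
end

section
/- (Intra-group difference identity) Fix t ∈ {1, …, T} with m = |D_t| ≥ 2, let q_i and q_j be distinct elements of D_t, write P = U_{t−1} and C̃ = D_t \ {q_i, q_j}. Then φ^σ(q_i; v, D) − φ^σ(q_j; v, D) = (1/(m−1)) · Σ_{S ⊆ C̃} (C(m−2, |S|))⁻¹ · (v(P ∪ S ∪ {q_i}) − v(P ∪ S ∪ {q_j})). -/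
open Finset

variable {α : Type*}

/-!
Pair the coalitions `S` and `S ∪ {j}`, for `S` avoiding both `i` and `j`. In the difference of the
Shapley values of `i` and `j` the utilities of `S` and of `S ∪ {i, j}` cancel, and the utility
difference `u (S ∪ {i}) - u (S ∪ {j})` collects the weights of two adjacent coalition sizes, whose
sum is a multiple of the weight for the population with one member fewer. An ADS value is the
Shapley value of the game `S ↦ v (U_{t-1} ∪ S)` on `D_t`.
-/

section Shapley

variable {K : Type*} [Field K]

theorem inv_choose_add_inv_choose_succ [CharZero K] {n s : ℕ} (h : s ≤ n) :
    ((n + 1).choose s : K)⁻¹ + ((n + 1).choose (s + 1) : K)⁻¹ =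
      (n + 2) / (n + 1) * (n.choose s : K)⁻¹ := by
  obtain ⟨r, rfl⟩ := Nat.exists_eq_add_of_le h
  have hsr : (s : K) + r + 1 ≠ 0 := by exact_mod_cast (s + r).succ_ne_zero
  have hfact (k : ℕ) : (k.factorial : K) ≠ 0 := by exact_mod_cast k.factorial_ne_zero
  have choose_left : ((s + r + 1).choose s : K) =
      (s + r + 1).factorial / (s.factorial * (r + 1).factorial) := by
    rw [Nat.add_assoc, Nat.cast_add_choose]
  have choose_right : ((s + r + 1).choose (s + 1) : K) =
      (s + r + 1).factorial / ((s + 1).factorial * r.factorial) := by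
    rw [Nat.add_right_comm, Nat.cast_add_choose]
  rw [choose_left, choose_right, Nat.cast_add_choose]
  simp only [Nat.factorial_succ, Nat.cast_mul, Nat.cast_add, Nat.cast_one]
  field_simp [hfact]
  ring

variable [DecidableEq α]

/-- The Shapley value of the player `z` in the cooperative game with player set `N` and utility
`u`, as a weighted sum of marginal contributions over the coalitions without `z`. The usual
normalization `u ∅ = 0` is not imposed, since `v U_{t-1}` need not vanish. -/
def shapleyValue (N : Finset α) (u : Finset α → K) (z : α) : K :=
  (N.card : K)⁻¹ *
    ∑ S ∈ (N.erase z).powerset,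
      ((N.card - 1).choose S.card : K)⁻¹ * (u (insert z S) - u S)

theorem shapleyValue_eq_sum_powerset_erase_erase {N : Finset α} (u : Finset α → K) {i j : α}
    (hj : j ∈ N) (hij : i ≠ j) :
    shapleyValue N u i =
      (N.card : K)⁻¹ *
        ∑ S ∈ ((N.erase i).erase j).powerset,
          (((N.card - 1).choose S.card : K)⁻¹ * (u (insert i S) - u S) +
            ((N.card - 1).choose (S.card + 1) : K)⁻¹ *
              (u (insert i (insert j S)) - u (insert j S))) := by
  have hj_erase : j ∈ N.erase i := mem_erase.mpr ⟨hij.symm, hj⟩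
  have hj_notMem : j ∉ (N.erase i).erase j := notMem_erase _ _
  rw [shapleyValue, ← insert_erase hj_erase, sum_powerset_insert hj_notMem,
    insert_erase hj_erase, ← sum_add_distrib]
  congr! 2 with S hS
  rw [card_insert_of_notMem fun h ↦ hj_notMem (mem_powerset.mp hS h)]

theorem shapleyValue_sub_shapleyValue [CharZero K] {N : Finset α} (u : Finset α → K) {i j : α}
    (hi : i ∈ N) (hj : j ∈ N) (hij : i ≠ j) :
    shapleyValue N u i - shapleyValue N u j =
      ((N.card : K) - 1)⁻¹ *
        ∑ S ∈ ((N.erase i).erase j).powerset,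
          ((N.card - 2).choose S.card : K)⁻¹ * (u (insert i S) - u (insert j S)) := by
  have hj_erase : j ∈ N.erase i := mem_erase.mpr ⟨hij.symm, hj⟩
  obtain ⟨n, hn⟩ : ∃ n, ((N.erase i).erase j).card = n := ⟨_, rfl⟩
  have hN : N.card = n + 2 := by
    rw [← card_erase_add_one hi, ← card_erase_add_one hj_erase, hn]
  have hn1 : (n : K) + 1 ≠ 0 := by exact_mod_cast n.succ_ne_zero
  have hn2 : (n : K) + 2 ≠ 0 := by exact_mod_cast (n + 1).succ_ne_zero
  have hN_sub : ((n + 2 : ℕ) : K) - 1 = n + 1 := by push_cast; ring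
  rw [shapleyValue_eq_sum_powerset_erase_erase u hj hij,
    shapleyValue_eq_sum_powerset_erase_erase u hi hij.symm, erase_right_comm (a := j),
    ← mul_sub, ← sum_sub_distrib, mul_sum, mul_sum, hN, hN_sub]
  refine sum_congr rfl fun S hS ↦ ?_
  have hS_card : S.card ≤ n := hn ▸ card_le_card (mem_powerset.mp hS)
  have hweight : ((n : K) + 2)⁻¹ *
        (((n + 1).choose S.card : K)⁻¹ + ((n + 1).choose (S.card + 1) : K)⁻¹) =
      ((n : K) + 1)⁻¹ * (n.choose S.card : K)⁻¹ := by
    rw [inv_choose_add_inv_choose_succ hS_card]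
    field_simp
  rw [insert_comm j i S, Nat.add_sub_cancel, show n + 2 - 1 = n + 1 from rfl, Nat.cast_add,
    Nat.cast_two]
  linear_combination (u (insert i S) - u (insert j S)) * hweight

end Shapley

theorem ads_eq_shapleyValue [DecidableEq α] (Dg : ℕ → Finset α) (v : Finset α → ℝ) (t : ℕ)
    (z : α) :
    ADS Dg v t z = shapleyValue (Dg t) (fun S ↦ v (prefixUnion Dg t ∪ S)) z := by
  simp only [ADS, shapleyValue, one_div, union_insert, union_singleton]

theorem ads_intra_group_difference_general [DecidableEq α] (Dg : ℕ → Finset α)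
    (v : Finset α → ℝ) (t : ℕ) {qi qj : α} (hqi : qi ∈ Dg t) (hqj : qj ∈ Dg t) (hij : qi ≠ qj) :
    ADS Dg v t qi - ADS Dg v t qj =
      (1 / ((Dg t).card - 1 : ℝ)) *
        ∑ S ∈ ((Dg t).erase qi |>.erase qj).powerset,
          ((((Dg t).card - 2).choose S.card : ℝ))⁻¹ *
            (v (prefixUnion Dg t ∪ S ∪ {qi}) - v (prefixUnion Dg t ∪ S ∪ {qj})) := by
  simp only [ads_eq_shapleyValue, shapleyValue_sub_shapleyValue _ hqi hqj hij, one_div,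
    union_insert, union_singleton]

/-- Intra-group difference identity: for distinct `q_i, q_j` in a group `D_t` with
`m = |D_t| ≥ 2`, the difference of their ADS values is a combinatorially weighted sum of
utility differences over subsets of `D_t \ {q_i, q_j}`, on top of the prefix `P = U_{t−1}`. -/
theorem ads_intra_group_difference [DecidableEq α]
    (T : ℕ) (hT : 1 ≤ T) (Dg : ℕ → Finset α)
    (hdisj : ∀ i < T, ∀ j < T, i ≠ j → Disjoint (Dg i) (Dg j))
    (hne : ∀ j < T, (Dg j).Nonempty)
    (D : Finset α) (hD : D = (Finset.range T).biUnion Dg)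
    (v : Finset α → ℝ)
    (t : ℕ) (ht : t < T)
    (m : ℕ) (hm : m = (Dg t).card) (hm2 : 2 ≤ m)
    (qi qj : α) (hqi : qi ∈ Dg t) (hqj : qj ∈ Dg t) (hij : qi ≠ qj) :
    ADS Dg v t qi - ADS Dg v t qj =
      (1 / (m - 1 : ℝ)) *
        ∑ S ∈ ((Dg t).erase qi |>.erase qj).powerset,
          (((m - 2).choose S.card : ℝ))⁻¹ *
            (v (prefixUnion Dg t ∪ S ∪ {qi}) - v (prefixUnion Dg t ∪ S ∪ {qj})) := by
  subst hm
  exact ads_intra_group_difference_general Dg v t hqi hqj hij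
end

section
/- (KNN-ADS, Case 1) For every i with 1 ≤ i ≤ m − 1, if K ≤ c_i, then φ(q_i) − φ(q_{i+1}) = 0. -/
open Finset

variable {β L : Type*}

/-- The elements of `A` listed in increasing order of distance `d` to the query. -/
noncomputable def sortByDist (d : β → ℝ) (A : Finset β) : List β :=
  A.toList.mergeSort (fun p q => decide (d p ≤ d q))

/-- `N_i(A)`: the point of `A` with the `i`-th smallest distance to the query (1-indexed). -/
noncomputable def nthNearest [Inhabited β] (d : β → ℝ) (A : Finset β) (i : ℕ) : β :=
  (sortByDist d A).getD (i - 1) default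

/-- The KNN utility of a finite set `A` of labeled points at a query with label `ytest`:
`v_knn(A) = (1/K) · Σ_{i=1}^{min(K,|A|)} 1[y(N_i(A)) = y_test]`. -/
noncomputable def vknn [Inhabited β] [DecidableEq L] (K : ℕ) (ytest : L) (y : β → L)
    (d : β → ℝ) (A : Finset β) : ℝ :=
  (1 / K) * ∑ i ∈ Finset.Icc 1 (min K A.card),
    if y (nthNearest d A i) = ytest then (1 : ℝ) else 0

/-- The ADS value of a point `q` in the current group `C`, given the prefix instances `P`,
for the KNN utility. -/
noncomputable def adsKnn [Inhabited β] [DecidableEq β] [DecidableEq L] (K : ℕ) (ytest : L)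
    (y : β → L) (d : β → ℝ) (P C : Finset β) (q : β) : ℝ :=
  (1 / C.card) *
    ∑ S ∈ (C.erase q).powerset,
      (((C.card - 1).choose S.card : ℝ))⁻¹ *
        (vknn K ytest y d (P ∪ S ∪ {q}) - vknn K ytest y d (P ∪ S))

/-!
If `K` points of `P` lie at distance less than `t`, then for every `A ⊇ P` the `K` nearest points
of `A` are already determined by the points of `A` at distance less than `t`. So a point `q` at
distance at least `t` makes no difference to the utility, and each of its marginal contributions,
hence its ADS value, vanishes. With `t` the distance of `q_i`, this applies to both `q_i` and
`q_{i+1}`.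
-/

theorem filter_prefix_of_pairwise {α : Type*} {p : α → Bool} {l : List α}
    (hl : l.Pairwise fun a b => p b → p a) : l.filter p <+: l := by
  induction l with
  | nil => simp
  | cons a l ih =>
    obtain ⟨ha, hl⟩ := List.pairwise_cons.mp hl
    by_cases hpa : p a
    · simpa only [List.filter_cons_of_pos hpa, List.prefix_cons_inj] using ih hl
    · have hnil : l.filter p = [] := List.filter_eq_nil_iff.mpr fun b hb hpb => hpa (ha b hb hpb)
      simp only [List.filter_cons_of_neg hpa, hnil, List.nil_prefix]

section SortByDist

variable (d : β → ℝ) (A : Finset β)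

theorem sortByDist_perm : (sortByDist d A).Perm A.toList :=
  List.mergeSort_perm _ _

theorem length_sortByDist : (sortByDist d A).length = #A := by
  rw [(sortByDist_perm d A).length_eq, length_toList]

theorem pairwise_sortByDist : (sortByDist d A).Pairwise fun p q => d p ≤ d q :=
  List.pairwise_mergeSort' (d ⁻¹'o (· ≤ ·)) A.toList

variable {d A}

theorem mem_sortByDist {p : β} : p ∈ sortByDist d A ↔ p ∈ A := by
  rw [(sortByDist_perm d A).mem_iff, mem_toList]

theorem nodup_sortByDist : (sortByDist d A).Nodup :=
  (sortByDist_perm d A).nodup_iff.mpr A.nodup_toList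

theorem sortByDist_filter {p : β → Prop} [DecidablePred p] (hinj : Set.InjOn d ↑(A.filter p)) :
    sortByDist d (A.filter p) = (sortByDist d A).filter (p ·) := by
  have hmem (a : β) : a ∈ (sortByDist d A).filter (p ·) ↔ a ∈ A.filter p := by
    simp only [List.mem_filter, mem_sortByDist, decide_eq_true_eq, mem_filter]
  refine List.Perm.eq_of_pairwise (le := fun a b => d a ≤ d b) ?_
    (pairwise_sortByDist d _) ((pairwise_sortByDist d A).filter _) ?_
  · intro a b ha hb hab hba
    exact hinj (mem_sortByDist.mp ha) ((hmem b).mp hb) (hab.antisymm hba)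
  · exact (List.perm_ext_iff_of_nodup nodup_sortByDist (nodup_sortByDist.filter _)).mpr
      fun a => mem_sortByDist.trans (hmem a).symm

theorem sortByDist_filter_lt_prefix {t : ℝ} (hinj : Set.InjOn d ↑(A.filter (d · < t))) :
    sortByDist d (A.filter (d · < t)) <+: sortByDist d A := by
  rw [sortByDist_filter hinj]
  refine filter_prefix_of_pairwise ((pairwise_sortByDist d A).imp fun hpq => ?_)
  simpa only [decide_eq_true_eq] using hpq.trans_lt

end SortByDist

section NthNearest

variable [Inhabited β] {d : β → ℝ} {A : Finset β}

theorem nthNearest_filter_lt {t : ℝ} (hinj : Set.InjOn d ↑(A.filter (d · < t))) {i : ℕ}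
    (hi : i ∈ Icc 1 #(A.filter (d · < t))) :
    nthNearest d (A.filter (d · < t)) i = nthNearest d A i := by
  obtain ⟨far, hfar⟩ := sortByDist_filter_lt_prefix hinj
  obtain ⟨hi1, hi⟩ := mem_Icc.mp hi
  rw [nthNearest, nthNearest, ← hfar, List.getD_append]
  rw [length_sortByDist]
  lia

theorem monotoneOn_dist_nthNearest (d : β → ℝ) (A : Finset β) :
    MonotoneOn (fun i => d (nthNearest d A i)) (Set.Icc 1 #A) := by
  intro i hi j hj hij
  have lt_length {k : ℕ} (hk : k ∈ Set.Icc 1 #A) : k - 1 < (sortByDist d A).length := by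
    rw [length_sortByDist]
    exact Nat.sub_one_lt_of_le hk.1 hk.2
  simp only [nthNearest, List.getD_eq_getElem _ _ (lt_length hi),
    List.getD_eq_getElem _ _ (lt_length hj)]
  exact (pairwise_sortByDist d A).rel_get_of_le (Nat.sub_le_sub_right hij 1)

end NthNearest

section Utility

variable [Inhabited β] [DecidableEq L] {K : ℕ} (ytest : L) (y : β → L) {d : β → ℝ} {t : ℝ}

theorem vknn_filter_lt {A : Finset β} (hinj : Set.InjOn d ↑(A.filter (d · < t)))
    (hK : K ≤ #(A.filter (d · < t))) :
    vknn K ytest y d (A.filter (d · < t)) = vknn K ytest y d A := by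
  rw [vknn, vknn, min_eq_left hK, min_eq_left (hK.trans (card_filter_le _ _))]
  congr 1
  refine sum_congr rfl fun i hi => ?_
  rw [nthNearest_filter_lt hinj (Icc_subset_Icc_right hK hi)]

variable [DecidableEq β]

theorem vknn_insert_of_le {A : Finset β} {q : β} (hinj : Set.InjOn d ↑(A.filter (d · < t)))
    (hK : K ≤ #(A.filter (d · < t))) (hq : t ≤ d q) :
    vknn K ytest y d (insert q A) = vknn K ytest y d A := by
  have hnear : (insert q A).filter (d · < t) = A.filter (d · < t) := by
    rw [filter_insert, if_neg hq.not_gt]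
  rw [← vknn_filter_lt ytest y (t := t) (A := insert q A) (by rwa [hnear]) (by rwa [hnear]), hnear,
    vknn_filter_lt ytest y hinj hK]

theorem knn_ads_case1_general {P C : Finset β} {q : β}
    (hinj : Set.InjOn d ↑((P ∪ C).filter (d · < t)))
    (hK : K ≤ #(P.filter (d · < t))) (hq : t ≤ d q) :
    adsKnn K ytest y d P C q = 0 := by
  refine mul_eq_zero_of_right _ (sum_eq_zero fun S hS => ?_)
  have hSC : S ⊆ C := (mem_powerset.mp hS).trans (erase_subset q C)
  have hinjS : Set.InjOn d ↑((P ∪ S).filter (d · < t)) :=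
    hinj.mono (coe_subset.mpr (filter_subset_filter _ (union_subset_union_right hSC)))
  have hKS : K ≤ #((P ∪ S).filter (d · < t)) :=
    hK.trans (card_le_card (filter_subset_filter _ subset_union_left))
  rw [union_singleton, vknn_insert_of_le ytest y hinjS hKS hq, sub_self, mul_zero]

end Utility

/-- KNN-ADS, Case 1: if `K ≤ c_i` (at least `K` prefix points are closer to the query than
the `i`-th nearest point of `C`), then consecutive ADS values coincide:
`φ(q_i) − φ(q_{i+1}) = 0`. -/
theorem knn_ads_case1 [Inhabited β] [DecidableEq β] [DecidableEq L]
    (K : ℕ) (hK : 1 ≤ K) (ytest : L) (y : β → L) (d : β → ℝ)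
    (P C : Finset β) (hPC : Disjoint P C)
    (hinj : Set.InjOn d ↑(P ∪ C))
    (m : ℕ) (hm : m = C.card)
    (i : ℕ) (hi1 : 1 ≤ i) (hi : i ≤ m - 1)
    (hKc : K ≤ (P.filter (fun p => d p < d (nthNearest d C i))).card) :
    adsKnn K ytest y d P C (nthNearest d C i) -
      adsKnn K ytest y d P C (nthNearest d C (i + 1)) = 0 := by
  have hnear := hinj.mono (coe_subset.mpr (filter_subset (d · < d (nthNearest d C i)) (P ∪ C)))
  have hle : d (nthNearest d C i) ≤ d (nthNearest d C (i + 1)) :=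
    monotoneOn_dist_nthNearest d C ⟨hi1, by lia⟩ ⟨by lia, by lia⟩ i.le_succ
  rw [knn_ads_case1_general ytest y hnear hKc le_rfl,
    knn_ads_case1_general ytest y hnear hKc hle, sub_self]
end
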